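/- For any two (not necessarily distinct) vertices z and w of G_0 there exists a vertex y of G_0 with degree exactly 2 such that d(z,y) + d(y,w) ≤ 6. -/

import Mathlib

/-- `W` is an `i`-packing in `G`: any two distinct vertices of `W` are at
graph distance greater than `i` in `G`. -/
def IsPacking {V : Type*} (G : SimpleGraph V) (i : ℕ) (W : Set V) : Prop :=
  ∀ u ∈ W, ∀ v ∈ W, u ≠ v → i < G.dist u v

/-- `c` is a `k`-packing coloring of `G`: every color lies in `{1, …, k}` and
for each `i ∈ {1, …, k}` the color class `c⁻¹(i)` is an `i`-packing. -/
def IsPackingColoring {V : Type*} (G : SimpleGraph V) (k : ℕ) (c : V → ℕ) : Prop :=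
  (∀ v, 1 ≤ c v ∧ c v ≤ k) ∧ ∀ i, 1 ≤ i → i ≤ k → IsPacking G i {v | c v = i}

/-- The packing chromatic number: the least `k` admitting a `k`-packing coloring. -/
noncomputable def packingChromaticNumber {V : Type*} (G : SimpleGraph V) : ℕ :=
  sInf {k | ∃ c : V → ℕ, IsPackingColoring G k c}


/-- Edges of `H`; vertices `y1,…,y7` are `0,…,6`, `z1,…,z7` are `7,…,13`,
and `w` is `14`. -/
def Hedges : List (Fin 15 × Fin 15) :=
  [(0,1),(1,2),(2,6),(6,5),(5,4),(4,0),(1,3),(3,5),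
   (7,8),(8,9),(9,13),(13,12),(12,11),(11,7),(8,10),(10,12),
   (3,14),(14,10),(2,7),(4,13)]

/-- The graph `H`. -/
def Hgraph : SimpleGraph (Fin 15) :=
  SimpleGraph.fromRel (fun u v => (u, v) ∈ Hedges)

/-- Glue two disjoint copies of `G` together with five new vertices
`Sum.inr (Sum.inr i)` for `i : Fin 5`: the `i`-th new vertex is adjacent
exactly to `p i` in the first copy and to `q i` in the second copy. -/
def glue {V : Type*} (G : SimpleGraph V) (p q : Fin 5 → V) :
    SimpleGraph (V ⊕ V ⊕ Fin 5) :=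
  SimpleGraph.fromRel (fun u v =>
    match u, v with
    | Sum.inl a, Sum.inl b => G.Adj a b
    | Sum.inr (Sum.inl a), Sum.inr (Sum.inl b) => G.Adj a b
    | Sum.inr (Sum.inr i), Sum.inl a => a = p i
    | Sum.inr (Sum.inr i), Sum.inr (Sum.inl b) => b = q i
    | _, _ => False)

/-- Attachment points of `a,b,c,d,x` in the first copy (`H'`):
`a ↦ y5`, `b ↦ z7`, `c ↦ y3`, `d ↦ z1`, `x ↦ w`. -/
def pH : Fin 5 → Fin 15 := ![4, 13, 2, 7, 14]

/-- Attachment points of `a,b,c,d,x` in the second copy (`H''`):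
`a ↦ y1`, `b ↦ z3`, `c ↦ z5`, `d ↦ y7`, `x ↦ w`. -/
def qH : Fin 5 → Fin 15 := ![0, 9, 11, 6, 14]

/-- The graph `G₀`: two disjoint copies of `H` plus the five vertices
`a,b,c,d,x`, which are `Sum.inr (Sum.inr 0), …, Sum.inr (Sum.inr 4)`. -/
def G₀ : SimpleGraph (Fin 15 ⊕ Fin 15 ⊕ Fin 5) := glue Hgraph pH qH

/-!
Every new vertex of `G₀` has degree 2, and a walk in a copy of `H` starting at the attachment point
of a new vertex extends to that vertex by one edge. It therefore suffices to find, for two vertices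
in copies of `H`, a new vertex whose attachment points in these copies are at total distance at most
4 from them; this is a finite check in `H`. If `z` or `w` is itself a new vertex, it can serve as
`y`, since `H` has diameter at most 4.
-/

section Distance

variable {V W : Type*} {G : SimpleGraph V} {G' : SimpleGraph W}

theorem edist_map_le (f : G →g G') (u v : V) : G'.edist (f u) (f v) ≤ G.edist u v := by
  by_cases h : G.Reachable u v
  · obtain ⟨p, hp⟩ := h.exists_walk_length_eq_edist
    calc G'.edist (f u) (f v) ≤ (p.map f).length := SimpleGraph.edist_le _
      _ = G.edist u v := by rw [SimpleGraph.Walk.length_map, hp]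
  · simp [SimpleGraph.edist_eq_top_of_not_reachable h]

theorem edist_le_one_add_of_adj {u v w : V} (h : G.Adj u v) :
    G.edist u w ≤ 1 + G.edist v w :=
  (G.edist_triangle (v := v)).trans (by rw [SimpleGraph.edist_eq_one_iff_adj.2 h])

theorem dist_add_dist_le_of_edist_add_edist_le {u v x y : V} {n : ℕ}
    (h : G.edist u v + G.edist x y ≤ n) : G.dist u v + G.dist x y ≤ n := by
  exact_mod_cast (add_le_add (ENat.natCast_toNat_le_self _) (ENat.natCast_toNat_le_self _)).trans h

theorem edist_le_succ_iff {u v : V} {n : ℕ} :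
    G.edist u v ≤ (n + 1 : ℕ) ↔ G.edist u v ≤ n ∨ ∃ w, G.edist u w ≤ n ∧ G.Adj w v := by
  constructor
  · intro h
    obtain ⟨p, hp⟩ := SimpleGraph.exists_walk_of_edist_ne_top (ne_top_of_le_ne_top (by simp) h)
    have hlen : p.length ≤ n + 1 := by rw [← hp] at h; exact_mod_cast h
    by_cases hnil : p.Nil
    · exact .inl (by simp [hnil.eq])
    · have hdrop : p.dropLast.length ≤ n := by
        have := p.length_dropLast_add_one hnil
        omega
      exact .inr ⟨p.penultimate, (SimpleGraph.edist_le p.dropLast).trans (by exact_mod_cast hdrop),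
        p.adj_penultimate hnil⟩
  · rintro (h | ⟨w, hw, hadj⟩)
    · exact h.trans (by exact_mod_cast n.le_succ)
    · calc G.edist u v ≤ G.edist u w + G.edist w v := G.edist_triangle
        _ ≤ (n + 1 : ℕ) := by
          rw [SimpleGraph.edist_eq_one_iff_adj.2 hadj]
          exact_mod_cast add_le_add_left hw 1

variable [Fintype V] [DecidableEq V] [DecidableRel G.Adj]

variable (G) in
/-- The closed ball of radius `n` around `u` in the graph metric, defined by layers as a filter
of `Finset.univ` so that membership is cheap to evaluate in the kernel. -/
def closedBallFinset (u : V) : ℕ → Finset V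
  | 0 => {u}
  | n + 1 => {v | v ∈ closedBallFinset u n ∨ ∃ w ∈ closedBallFinset u n, G.Adj w v}

theorem mem_closedBallFinset {u v : V} {n : ℕ} :
    v ∈ closedBallFinset G u n ↔ G.edist u v ≤ n := by
  induction n generalizing v with
  | zero => simp [closedBallFinset, eq_comm (a := v)]
  | succ n ih =>
    rw [edist_le_succ_iff]
    simp [closedBallFinset, ih]

instance decidableEdistLE (u v : V) (n : ℕ) : Decidable (G.edist u v ≤ n) :=
  decidable_of_iff _ mem_closedBallFinset

end Distance

section Glue

variable {V : Type*}

/-- The inclusion of a copy of `G` into `glue G p q`: the first copy for `true`, the second for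
`false`. -/
def glueInclusion (G : SimpleGraph V) (p q : Fin 5 → V) : Bool → (G →g glue G p q)
  | true => ⟨Sum.inl, fun h => by simp [glue, h, h.ne]⟩
  | false => ⟨fun a => Sum.inr (Sum.inl a), fun h => by simp [glue, h, h.ne]⟩

/-- The attachment points of the new vertices of `glue G p q` in the copy of `G` indexed as in
`glueInclusion`. -/
def glueAttachment (p q : Fin 5 → V) : Bool → Fin 5 → V
  | true => p
  | false => q

variable (G : SimpleGraph V) (p q : Fin 5 → V)

theorem neighborSet_glue_new (i : Fin 5) :
    (glue G p q).neighborSet (Sum.inr (Sum.inr i)) =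
      {Sum.inl (p i), Sum.inr (Sum.inl (q i))} := by
  ext (a | a | j) <;> simp [glue]

theorem ncard_neighborSet_glue_new (i : Fin 5) :
    ((glue G p q).neighborSet (Sum.inr (Sum.inr i))).ncard = 2 := by
  rw [neighborSet_glue_new, Set.ncard_pair Sum.inl_ne_inr]

theorem glue_adj_new_attachment (i : Fin 5) (side : Bool) :
    (glue G p q).Adj (Sum.inr (Sum.inr i))
      (glueInclusion G p q side (glueAttachment p q side i)) := by
  rw [← SimpleGraph.mem_neighborSet, neighborSet_glue_new]
  cases side
  · exact .inr rfl
  · exact .inl rfl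

theorem eq_new_or_eq_glueInclusion (v : V ⊕ V ⊕ Fin 5) :
    (∃ i, v = Sum.inr (Sum.inr i)) ∨ ∃ side a, v = glueInclusion G p q side a := by
  rcases v with a | a | i
  · exact .inr ⟨true, a, rfl⟩
  · exact .inr ⟨false, a, rfl⟩
  · exact .inl ⟨i, rfl⟩

theorem edist_glue_new_inclusion_le (i : Fin 5) (side : Bool) (a : V) :
    (glue G p q).edist (Sum.inr (Sum.inr i)) (glueInclusion G p q side a) ≤
      1 + G.edist (glueAttachment p q side i) a :=
  (edist_le_one_add_of_adj (glue_adj_new_attachment G p q i side)).trans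
    (add_le_add_right (edist_map_le (glueInclusion G p q side) _ a) 1)

variable {G} in
theorem edist_glue_new_le {n : ℕ∞} (hG : ∀ u v, G.edist u v ≤ n) (i : Fin 5)
    (v : V ⊕ V ⊕ Fin 5) : (glue G p q).edist (Sum.inr (Sum.inr i)) v ≤ 1 + (1 + n) := by
  have edist_inclusion_le (j : Fin 5) (side : Bool) (a : V) :
      (glue G p q).edist (Sum.inr (Sum.inr j)) (glueInclusion G p q side a) ≤ 1 + n :=
    (edist_glue_new_inclusion_le G p q j side a).trans (add_le_add_right (hG _ _) 1)
  obtain ⟨j, rfl⟩ | ⟨side, a, rfl⟩ := eq_new_or_eq_glueInclusion G p q v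
  · refine (edist_le_one_add_of_adj (glue_adj_new_attachment G p q i true)).trans
      (add_le_add_right ?_ 1)
    exact SimpleGraph.edist_comm.trans_le (edist_inclusion_le j true (p i))
  · exact (edist_inclusion_le i side a).trans le_add_self

end Glue

instance : DecidableRel Hgraph.Adj :=
  inferInstanceAs (DecidableRel (SimpleGraph.fromRel fun u v => (u, v) ∈ Hedges).Adj)

theorem edist_Hgraph_le_four : ∀ u v, Hgraph.edist u v ≤ (4 : ℕ) := by
  decide +kernel

-- Bounding the two distances separately makes the finite check decidable by `decidableEdistLE`.
theorem exists_edist_attachment_le_antidiagonal :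
    ∀ side side' u v, ∃ i, ∃ m ∈ Finset.HasAntidiagonal.antidiagonal (4 : ℕ),
      Hgraph.edist (glueAttachment pH qH side i) u ≤ m.1 ∧
        Hgraph.edist (glueAttachment pH qH side' i) v ≤ m.2 := by
  decide +kernel

theorem exists_edist_attachment_add_le_four (side side' : Bool) (u v : Fin 15) :
    ∃ i, Hgraph.edist (glueAttachment pH qH side i) u +
      Hgraph.edist (glueAttachment pH qH side' i) v ≤ 4 := by
  obtain ⟨i, m, hm, hu, hv⟩ := exists_edist_attachment_le_antidiagonal side side' u v
  refine ⟨i, (add_le_add hu hv).trans ?_⟩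
  exact_mod_cast (Finset.HasAntidiagonal.mem_antidiagonal.1 hm).le

theorem edist_G₀_new_le_six (i : Fin 5) (v : Fin 15 ⊕ Fin 15 ⊕ Fin 5) :
    G₀.edist (Sum.inr (Sum.inr i)) v ≤ 6 :=
  (edist_glue_new_le pH qH edist_Hgraph_le_four i v).trans (by norm_num)

theorem exists_edist_G₀_new_add_le_six (z w : Fin 15 ⊕ Fin 15 ⊕ Fin 5) :
    ∃ i, G₀.edist z (Sum.inr (Sum.inr i)) + G₀.edist (Sum.inr (Sum.inr i)) w ≤ 6 := by
  obtain ⟨i, rfl⟩ | ⟨side, u, rfl⟩ := eq_new_or_eq_glueInclusion Hgraph pH qH z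
  · exact ⟨i, by simpa using edist_G₀_new_le_six i w⟩
  obtain ⟨i, rfl⟩ | ⟨side', v, rfl⟩ := eq_new_or_eq_glueInclusion Hgraph pH qH w
  · exact ⟨i, by simpa using SimpleGraph.edist_comm.trans_le (edist_G₀_new_le_six i _)⟩
  obtain ⟨i, hi⟩ := exists_edist_attachment_add_le_four side side' u v
  refine ⟨i, ?_⟩
  rw [SimpleGraph.edist_comm]
  calc _ ≤ (1 + Hgraph.edist (glueAttachment pH qH side i) u) +
        (1 + Hgraph.edist (glueAttachment pH qH side' i) v) :=
      add_le_add (edist_glue_new_inclusion_le Hgraph pH qH i side u)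
        (edist_glue_new_inclusion_le Hgraph pH qH i side' v)
    _ = (1 + 1) + (Hgraph.edist (glueAttachment pH qH side i) u +
        Hgraph.edist (glueAttachment pH qH side' i) v) := add_add_add_comm _ _ _ _
    _ ≤ (1 + 1) + 4 := add_le_add_right hi _
    _ = 6 := by norm_num

/-- For any two (not necessarily distinct) vertices `z, w` of `G₀` there is a
vertex `y` of degree exactly `2` with `d(z,y) + d(y,w) ≤ 6`. -/
theorem stmt9 (z w : Fin 15 ⊕ Fin 15 ⊕ Fin 5) :
    ∃ y, (G₀.neighborSet y).ncard = 2 ∧ G₀.dist z y + G₀.dist y w ≤ 6 := by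
  obtain ⟨i, hi⟩ := exists_edist_G₀_new_add_le_six z w
  exact ⟨Sum.inr (Sum.inr i), ncard_neighborSet_glue_new Hgraph pH qH i,
    dist_add_dist_le_of_edist_add_edist_le hi⟩
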